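/- The cut-generating conic program is strongly feasible: given A ∈ ℝ^{m×n}, b ∈ ℝ^m, a proper cone K ⊆ ℝⁿ, and for each h = 1,…,H a matrix D_h ∈ ℝ^{m_h×n}, a vector d_h ∈ ℝ^{m_h} and a proper cone Q_h ⊆ ℝ^{m_h}, there exist α ∈ ℝⁿ, β ∈ ℝ, and for each h vectors u_h ∈ ℝ^m, λ_h ∈ int K*, v_h ∈ int Q_h* such that α = Aᵀu_h + λ_h + D_hᵀv_h and β < bᵀu_h + d_hᵀv_h for every h. (In fact one may take u_h = 0 for all h.) -/

import Mathlib

open Matrix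

/-- A proper cone: closed, convex, closed under nonnegative scaling,
pointed (`K ∩ (−K) = {0}`), with nonempty interior. -/
def IsProperCone {n : ℕ} (K : Set (Fin n → ℝ)) : Prop :=
  IsClosed K ∧ Convex ℝ K ∧ (∀ x ∈ K, ∀ t : ℝ, 0 ≤ t → t • x ∈ K) ∧
    K ∩ (-K) = {0} ∧ (interior K).Nonempty

/-- The dual cone `K* = {u : uᵀx ≥ 0 for all x ∈ K}`. -/
def dualCone' {n : ℕ} (K : Set (Fin n → ℝ)) : Set (Fin n → ℝ) :=
  {u | ∀ x ∈ K, 0 ≤ u ⬝ᵥ x}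
lemma functional_eq_dot {n : ℕ} (f : (Fin n → ℝ) →ₗ[ℝ] ℝ) :
    ∃ w : Fin n → ℝ, ∀ x, f x = w ⬝ᵥ x := by
  refine ⟨fun i => f (Pi.single i 1), fun x => ?_⟩
  rw [LinearMap.pi_apply_eq_sum_univ f x]
  simp only [dotProduct, smul_eq_mul]
  refine Finset.sum_congr rfl fun i _ => ?_
  rw [mul_comm]
  congr 2
  ext j
  simp [Pi.single_apply, eq_comm]

lemma zero_mem_cone {n : ℕ} {K : Set (Fin n → ℝ)} (hK : IsProperCone K) : (0 : Fin n → ℝ) ∈ K := by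
  have h : (0 : Fin n → ℝ) ∈ K ∩ (-K) := by rw [hK.2.2.2.1]; rfl
  exact h.1

lemma mem_of_bidual {n : ℕ} {K : Set (Fin n → ℝ)} (hK : IsProperCone K) (w : Fin n → ℝ)
    (hw : ∀ u ∈ dualCone' K, u ⬝ᵥ w = 0) : w ∈ K := by
  by_contra hwK
  obtain ⟨f, c, h1, h2⟩ := geometric_hahn_banach_closed_point hK.2.1 hK.1 hwK
  obtain ⟨y, hy⟩ := functional_eq_dot (f : (Fin n → ℝ) →ₗ[ℝ] ℝ)
  have hy' : ∀ x, f x = y ⬝ᵥ x := hy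
  have hc : 0 < c := by simpa using h1 0 (zero_mem_cone hK)
  have hm : -y ∈ dualCone' K := by
    intro x hx
    rw [neg_dotProduct, ← hy']
    by_contra hneg
    push Not at hneg
    have hp : 0 < f x := by linarith
    have := h1 _ (hK.2.2.1 x hx (c / f x) (by positivity))
    rw [map_smul, smul_eq_mul, div_mul_cancel₀ _ hp.ne'] at this
    exact lt_irrefl _ this
  have := hw _ hm
  rw [neg_dotProduct, ← hy'] at this
  linarith

lemma dual_convex {n : ℕ} (K : Set (Fin n → ℝ)) : Convex ℝ (dualCone' K) := by
  intro x hx y hy a b ha hb _ z hz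
  rw [add_dotProduct, smul_dotProduct, smul_dotProduct]
  exact add_nonneg (mul_nonneg ha (hx z hz)) (mul_nonneg hb (hy z hz))

lemma dual_interior_nonempty {n : ℕ} {K : Set (Fin n → ℝ)} (hK : IsProperCone K) :
    (interior (dualCone' K)).Nonempty := by
  have h0 : (0 : Fin n → ℝ) ∈ dualCone' K := fun x _ => by simp
  rw [(dual_convex K).interior_nonempty_iff_affineSpan_eq_top,
    AffineSubspace.affineSpan_eq_top_iff_vectorSpan_eq_top_of_nonempty ℝ _ _ ⟨0, h0⟩,
    vectorSpan_eq_span_vsub_set_right ℝ h0]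
  simp only [vsub_eq_sub, sub_zero, Set.image_id']
  by_contra hne
  obtain ⟨f, hf0, hf⟩ := Submodule.exists_le_ker_of_lt_top _ (lt_top_iff_ne_top.2 hne)
  obtain ⟨w, hw⟩ := functional_eq_dot f
  have hv : ∀ u ∈ dualCone' K, u ⬝ᵥ w = 0 := fun u hu => by
    rw [dotProduct_comm, ← hw]
    exact hf (Submodule.subset_span hu)
  have hwm : w ∈ K ∩ (-K) :=
    ⟨mem_of_bidual hK w hv, mem_of_bidual hK (-w) fun u hu => by simp [hv u hu]⟩
  rw [hK.2.2.2.1] at hwm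
  apply hf0
  refine LinearMap.ext fun x => ?_
  simp [hw, Set.mem_singleton_iff.1 hwm]

lemma smul_mem_interior_dual {n : ℕ} {K : Set (Fin n → ℝ)} {v : Fin n → ℝ}
    (hv : v ∈ interior (dualCone' K)) {s : ℝ} (hs : 0 < s) :
    s • v ∈ interior (dualCone' K) := by
  have hc : Continuous fun x : Fin n → ℝ => s⁻¹ • x := by fun_prop
  refine interior_maximal ?_ (isOpen_interior.preimage hc)
    (show s⁻¹ • s • v ∈ interior (dualCone' K) by rwa [inv_smul_smul₀ hs.ne'])
  intro x hx z hz
  have := interior_subset hx z hz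
  rw [smul_dotProduct, smul_eq_mul] at this
  exact nonneg_of_mul_nonneg_right this (by positivity)

/-- The cut-generating conic program is strongly feasible. -/
theorem cut_stmt_7 {m n H : ℕ} (A : Matrix (Fin m) (Fin n) ℝ) (b : Fin m → ℝ)
    (K : Set (Fin n → ℝ)) (hK : IsProperCone K)
    (mq : Fin H → ℕ) (D : ∀ h : Fin H, Matrix (Fin (mq h)) (Fin n) ℝ)
    (d : ∀ h : Fin H, Fin (mq h) → ℝ) (Q : ∀ h : Fin H, Set (Fin (mq h) → ℝ))
    (hQ : ∀ h, IsProperCone (Q h)) :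
    ∃ (α : Fin n → ℝ) (β : ℝ) (u : Fin H → Fin m → ℝ)
      (lam : Fin H → Fin n → ℝ) (v : ∀ h : Fin H, Fin (mq h) → ℝ),
      ∀ h : Fin H, lam h ∈ interior (dualCone' K) ∧ v h ∈ interior (dualCone' (Q h)) ∧
        α = Aᵀ.mulVec (u h) + lam h + (D h)ᵀ.mulVec (v h) ∧
        β < b ⬝ᵥ u h + d h ⬝ᵥ v h := by
  obtain ⟨k, hk⟩ := dual_interior_nonempty hK
  choose q hq using fun h => dual_interior_nonempty (hQ h)
  have hs : ∀ h, ∃ s : ℝ, 0 < s ∧ k - s • (D h)ᵀ.mulVec (q h) ∈ interior (dualCone' K) := by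
    intro h
    have hc : Continuous fun s : ℝ => k - s • (D h)ᵀ.mulVec (q h) := by fun_prop
    have hn : ∀ᶠ s in nhds (0 : ℝ), k - s • (D h)ᵀ.mulVec (q h) ∈ interior (dualCone' K) :=
      hc.continuousAt.eventually_mem (isOpen_interior.mem_nhds (by simpa using hk))
    obtain ⟨ε, hε, hb⟩ := Metric.eventually_nhds_iff.1 hn
    refine ⟨ε / 2, by positivity, hb ?_⟩
    rw [Real.dist_eq, sub_zero, abs_of_pos (by positivity)]
    linarith
  choose s hs0 hs using hs
  obtain ⟨B, hB⟩ := (Set.finite_range fun h => d h ⬝ᵥ (s h • q h)).bddBelow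
  refine ⟨k, B - 1, 0, fun h => k - s h • (D h)ᵀ.mulVec (q h), fun h => s h • q h, fun h =>
    ⟨hs h, smul_mem_interior_dual (hq h) (hs0 h), ?_, ?_⟩⟩
  · simp [Matrix.mulVec_smul]
  · have : B ≤ d h ⬝ᵥ (s h • q h) := hB ⟨h, rfl⟩
    have h0 : b ⬝ᵥ (0 : Fin H → Fin m → ℝ) h = 0 := by simp
    rw [h0]
    linarith
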